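/- Let y ∈ {-1,1}, μ ∈ ℝ, σ > 0, and let σ̂² be the variance of the probit-tilted Gaussian p(x) ∝ Φ(y x) φ(x; μ, σ²). Then 0 < σ̂² < σ², i.e., conditioning a Gaussian on a probit observation strictly reduces variance. -/

import Mathlib

open MeasureTheory

noncomputable def stdPdf (x : ℝ) : ℝ :=
  (Real.sqrt (2 * Real.pi))⁻¹ * Real.exp (-x ^ 2 / 2)

noncomputable def stdCdf (x : ℝ) : ℝ := ∫ u in Set.Iic x, stdPdf u

noncomputable def gPdf (μ σ x : ℝ) : ℝ :=
  (σ * Real.sqrt (2 * Real.pi))⁻¹ * Real.exp (-(x - μ) ^ 2 / (2 * σ ^ 2))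

/-!
Tilting a measure by `x ↦ Φ(y x)` is exponential tilting by `g x = log Φ(y x)`, whose derivative is
`g' x = y λ(y x)` with `λ = φ / Φ` the inverse Mills ratio. Stein's identity for the Gaussian,
applied to `x ↦ (x - μ̂) Φ(y x)`, gives `σ̂² = σ² (1 + Cov(x, g' x))`, the covariance being that of
the tilted law. Since `1 / λ(x) = ∫_{t ≤ 0} exp (-x t - t² / 2) dt` is strictly increasing, `g'` is
strictly decreasing, and a non-constant random variable is negatively correlated with any strictly
decreasing function of itself.
-/

open ProbabilityTheory Real Set
open scoped NNReal

section Moments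

lemma sub_mul_sub_pos_of_strictMono {h : ℝ → ℝ} (hh : StrictMono h) {a b : ℝ} (hab : a ≠ b) :
    0 < (a - b) * (h a - h b) := by
  rcases hab.lt_or_gt with hlt | hgt
  · exact mul_pos_of_neg_of_neg (sub_neg.2 hlt) (sub_neg.2 (hh hlt))
  · exact mul_pos (sub_pos.2 hgt) (sub_pos.2 (hh hgt))

variable {Ω : Type*} {mΩ : MeasurableSpace Ω} {P : Measure Ω} {X Y : Ω → ℝ}

instance nullSingletonClass_tilted [NullSingletonClass P] (g : Ω → ℝ) :
    NullSingletonClass (P.tilted g) :=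
  nullSingletonClass_withDensity _

lemma integral_lt_integral_of_ae_lt [NeZero P] (hX : Integrable X P)
    (hY : Integrable Y P) (hXY : ∀ᵐ ω ∂P, X ω < Y ω) : ∫ ω, X ω ∂P < ∫ ω, Y ω ∂P := by
  have hle : X ≤ᵐ[P] Y := hXY.mono fun _ hω ↦ hω.le
  refine (integral_mono_ae hX hY hle).lt_of_ne fun heq ↦ ?_
  obtain ⟨ω, hlt, hω⟩ := (hXY.and ((integral_eq_iff_of_ae_le hX hY hle).1 heq)).exists
  exact hlt.ne hω

lemma integrable_sub_mul_sub [IsFiniteMeasure P] (hX : Integrable X P) (hY : Integrable Y P)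
    (hXY : Integrable (X * Y) P) (a b : ℝ) :
    Integrable (fun ω ↦ (X ω - a) * (Y ω - b)) P := by
  refine ((hXY.sub (hY.const_mul a)).sub ((hX.sub (integrable_const a)).mul_const b)).congr
    (.of_forall fun ω ↦ ?_)
  simp only [Pi.sub_apply, Pi.mul_apply]
  ring

variable [IsProbabilityMeasure P]

lemma covariance_eq_integral_sub_mul_sub (hX : Integrable X P) (hY : Integrable Y P)
    (hXY : Integrable (X * Y) P) (c : ℝ) :
    cov[X, Y; P] = ∫ ω, (X ω - P[X]) * (Y ω - c) ∂P := by
  have hcenter : ∫ ω, (X ω - P[X]) ∂P = 0 := by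
    rw [integral_sub hX (integrable_const _), integral_const, probReal_univ, one_smul, sub_self]
  have hint := integrable_sub_mul_sub hX hY hXY P[X]
  rw [covariance, ← sub_eq_zero, ← integral_sub (hint _) (hint c)]
  simp only [← mul_sub, sub_sub_sub_cancel_left]
  rw [integral_mul_const, hcenter, zero_mul]

lemma covariance_strictMono_comp_pos {h : ℝ → ℝ} (hh : StrictMono h) (hX : Integrable X P)
    (hhX : Integrable (h ∘ X) P) (hXhX : Integrable (X * h ∘ X) P) (hVar : Var[X; P] ≠ 0) :
    0 < cov[X, h ∘ X; P] := by
  rw [covariance_eq_integral_sub_mul_sub hX hhX hXhX (h P[X])]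
  have hnonneg : 0 ≤ fun ω ↦ (X ω - P[X]) * ((h ∘ X) ω - h P[X]) := fun ω ↦ by
    rcases eq_or_ne (X ω) P[X] with heq | hne
    · simp [heq]
    · exact (sub_mul_sub_pos_of_strictMono hh hne).le
  refine (integral_nonneg hnonneg).lt_of_ne' fun hzero ↦ hVar ?_
  have hae := (integral_eq_zero_iff_of_nonneg hnonneg
    (integrable_sub_mul_sub hX hhX hXhX _ _)).1 hzero
  have hconst : X =ᵐ[P] fun _ ↦ P[X] := hae.mono fun ω hω ↦
    by_contra fun hne ↦ (sub_mul_sub_pos_of_strictMono hh hne).ne' hω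
  rw [variance, (evariance_eq_zero_iff hX.aemeasurable).2 hconst, ENNReal.toReal_zero]

lemma variance_id_pos {P : Measure ℝ} [IsProbabilityMeasure P] [NullSingletonClass P]
    (hP : MemLp id 2 P) : 0 < Var[id; P] := by
  refine (variance_nonneg id P).lt_of_ne' fun h ↦ ?_
  have hae : ∀ᵐ x ∂P, x = P[id] := ae_eq_integral_of_variance_eq_zero hP h
  have hne : ∀ᵐ x ∂P, x ≠ P[id] := by simp [ae_iff]
  obtain ⟨x, hx, hx'⟩ := (hae.and hne).exists
  exact hx' hx

end Moments

section Gaussian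

variable {μ : ℝ} {v : ℝ≥0}

lemma hasDerivAt_gaussianPDFReal (x : ℝ) :
    HasDerivAt (gaussianPDFReal μ v) (-((x - μ) / v) * gaussianPDFReal μ v x) x := by
  have hexponent : HasDerivAt (fun x ↦ -(x - μ) ^ 2 / (2 * v)) (-((x - μ) / v)) x := by
    refine ((((hasDerivAt_id x).sub_const μ).pow 2).neg.div_const (2 * (v : ℝ))).congr_deriv ?_
    simp only [id_eq, Nat.cast_ofNat, Nat.add_one_sub_one, pow_one]
    field_simp
  refine (hexponent.exp.const_mul (√(2 * π * v))⁻¹).congr_deriv ?_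
  rw [gaussianPDFReal]
  ring

lemma integrable_gaussianReal_iff (hv : v ≠ 0) {f : ℝ → ℝ} :
    Integrable f (gaussianReal μ v) ↔ Integrable fun x ↦ gaussianPDFReal μ v x * f x := by
  rw [gaussianReal_of_var_ne_zero μ hv, integrable_withDensity_iff_integrable_smul'
    (measurable_gaussianPDF μ v) (.of_forall fun _ ↦ gaussianPDF_lt_top)]
  simp only [toReal_gaussianPDF, smul_eq_mul]

lemma integral_sub_mul_gaussianReal {f f' : ℝ → ℝ} (hderiv : ∀ x, HasDerivAt f (f' x) x)
    (hf : Integrable f (gaussianReal μ v)) (hf' : Integrable f' (gaussianReal μ v))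
    (hxf : Integrable (fun x ↦ (x - μ) * f x) (gaussianReal μ v)) :
    ∫ x, (x - μ) * f x ∂gaussianReal μ v = v * ∫ x, f' x ∂gaussianReal μ v := by
  rcases eq_or_ne v 0 with rfl | hv
  · simp
  have hv' : (v : ℝ) ≠ 0 := NNReal.coe_ne_zero.2 hv
  rw [integrable_gaussianReal_iff hv] at hf hf' hxf
  have hxf' : Integrable fun x ↦ -((x - μ) / v) * gaussianPDFReal μ v x * f x :=
    (hxf.const_mul (-(v : ℝ)⁻¹)).congr (.of_forall fun x ↦ by ring)
  have hparts := integral_mul_deriv_eq_deriv_mul_of_integrable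
    (fun x _ ↦ hasDerivAt_gaussianPDFReal x) (fun x _ ↦ hderiv x) hf' hxf' hf
  simp only [integral_gaussianReal_eq_integral_smul hv, smul_eq_mul]
  rw [hparts, ← integral_neg, ← integral_const_mul]
  congr with x
  field_simp

variable {g g' : ℝ → ℝ}

lemma integral_sub_mul_tilted_gaussianReal {f f' : ℝ → ℝ}
    (hg : Integrable (fun x ↦ exp (g x)) (gaussianReal μ v))
    (hg' : ∀ x, HasDerivAt g (g' x) x) (hf' : ∀ x, HasDerivAt f (f' x) x)
    (hf : Integrable f ((gaussianReal μ v).tilted g))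
    (hff' : Integrable (fun x ↦ f' x + f x * g' x) ((gaussianReal μ v).tilted g))
    (hxf : Integrable (fun x ↦ (x - μ) * f x) ((gaussianReal μ v).tilted g)) :
    ∫ x, (x - μ) * f x ∂(gaussianReal μ v).tilted g =
      v * ∫ x, f' x + f x * g' x ∂(gaussianReal μ v).tilted g := by
  rw [integrable_tilted_iff hg] at hf hff' hxf
  simp only [integral_tilted, smul_eq_mul, div_mul_eq_mul_div, integral_div]
  have hstein := integral_sub_mul_gaussianReal (f := fun x ↦ exp (g x) * f x)
    (fun x ↦ ((hg' x).exp.mul (hf' x)).congr_deriv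
      (show _ = exp (g x) * (f' x + f x * g' x) by ring))
    hf hff' (hxf.congr (.of_forall fun x ↦ mul_left_comm _ _ _))
  simp only [mul_left_comm (exp _), hstein, mul_div_assoc]

lemma variance_id_tilted_gaussianReal
    (hg : Integrable (fun x ↦ exp (g x)) (gaussianReal μ v)) (hg' : ∀ x, HasDerivAt g (g' x) x)
    (hx : MemLp id 2 ((gaussianReal μ v).tilted g))
    (hint : Integrable g' ((gaussianReal μ v).tilted g))
    (hxint : Integrable (id * g') ((gaussianReal μ v).tilted g)) :
    Var[id; (gaussianReal μ v).tilted g] =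
      v * (1 + cov[id, g'; (gaussianReal μ v).tilted g]) := by
  have := isProbabilityMeasure_tilted hg
  set P := (gaussianReal μ v).tilted g
  have hx_int : Integrable id P := hx.integrable one_le_two
  have hx_sq : Integrable (id * id) P := hx.integrable_mul hx
  have hxg' : Integrable (fun x ↦ (x - P[id]) * g' x) P := by
    simpa only [sub_zero, id_eq] using integrable_sub_mul_sub hx_int hint hxint P[id] 0
  calc Var[id; P]
      = ∫ x, (x - P[id]) * (x - μ) ∂P := by
        rw [← covariance_self aemeasurable_id,
          covariance_eq_integral_sub_mul_sub hx_int hx_int hx_sq μ]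
        rfl
    _ = ∫ x, (x - μ) * (x - P[id]) ∂P := by simp only [mul_comm]
    _ = v * ∫ x, 1 + (x - P[id]) * g' x ∂P :=
        integral_sub_mul_tilted_gaussianReal hg hg' (fun x ↦ (hasDerivAt_id' x).sub_const P[id])
          (hx_int.sub (integrable_const _)) ((integrable_const 1).add hxg')
          (integrable_sub_mul_sub hx_int hx_int hx_sq μ P[id])
    _ = v * (1 + cov[id, g'; P]) := by
        rw [integral_add (integrable_const 1) hxg', integral_const, probReal_univ, one_smul,
          covariance_eq_integral_sub_mul_sub hx_int hint hxint 0]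
        simp only [sub_zero, id_eq]

theorem variance_id_tilted_gaussianReal_lt (hv : v ≠ 0)
    (hg : Integrable (fun x ↦ exp (g x)) (gaussianReal μ v)) (hg' : ∀ x, HasDerivAt g (g' x) x)
    (hanti : StrictAnti g') (hx : MemLp id 2 ((gaussianReal μ v).tilted g))
    (hint : Integrable g' ((gaussianReal μ v).tilted g))
    (hxint : Integrable (id * g') ((gaussianReal μ v).tilted g)) :
    Var[id; (gaussianReal μ v).tilted g] < v := by
  have := isProbabilityMeasure_tilted hg
  have := nullSingletonClass_gaussianReal (μ := μ) hv
  have hcov : 0 < cov[id, -g'; (gaussianReal μ v).tilted g] :=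
    covariance_strictMono_comp_pos hanti.neg (hx.integrable one_le_two) hint.neg
      (hxint.neg.congr (.of_forall fun x ↦ (mul_neg _ _).symm)) (variance_id_pos hx).ne'
  rw [covariance_neg_right, neg_pos] at hcov
  rw [variance_id_tilted_gaussianReal hg hg' hx hint hxint]
  exact mul_lt_of_lt_one_right (NNReal.coe_pos.2 (pos_iff_ne_zero.2 hv)) (by linarith)

end Gaussian

section Probit

lemma hasDerivAt_integral_Iic {f : ℝ → ℝ} {x : ℝ} (hf : Integrable f) (hfx : ContinuousAt f x) :
    HasDerivAt (fun x ↦ ∫ u in Iic x, f u) (f x) x := by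
  have hsplit (x : ℝ) : ∫ u in Iic x, f u = (∫ u in Iic 0, f u) + ∫ u in 0..x, f u := by
    rw [← intervalIntegral.integral_Iic_sub_Iic hf.integrableOn hf.integrableOn, add_sub_cancel]
  rw [funext hsplit]
  exact (intervalIntegral.integral_hasDerivAt_right hf.intervalIntegrable
    hf.aestronglyMeasurable.stronglyMeasurableAtFilter hfx).const_add _

lemma stdPdf_eq_gaussianPDFReal : stdPdf = gaussianPDFReal 0 1 := by
  funext x
  simp [stdPdf, gaussianPDFReal]

lemma gPdf_eq_gaussianPDFReal (μ : ℝ) {σ : ℝ} (hσ : 0 ≤ σ) :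
    gPdf μ σ = gaussianPDFReal μ (σ ^ 2).toNNReal := by
  funext x
  rw [gPdf, gaussianPDFReal, coe_toNNReal _ (sq_nonneg σ), sqrt_mul' _ (sq_nonneg σ), sqrt_sq hσ,
    mul_comm σ]

lemma stdCdf_eq_cdf : stdCdf = cdf (gaussianReal 0 1) := by
  funext x
  rw [cdf_eq_real, Measure.real, gaussianReal_apply_eq_integral 0 one_ne_zero,
    ENNReal.toReal_ofReal (integral_nonneg fun u ↦ gaussianPDFReal_nonneg 0 1 u), stdCdf,
    stdPdf_eq_gaussianPDFReal]

lemma stdCdf_le_one (x : ℝ) : stdCdf x ≤ 1 := by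
  rw [stdCdf_eq_cdf]
  exact cdf_le_one _ x

lemma stdPdf_pos (x : ℝ) : 0 < stdPdf x := by
  rw [stdPdf]
  positivity

lemma stdPdf_le_one (x : ℝ) : stdPdf x ≤ 1 := by
  have hsqrt : 1 ≤ √(2 * π) := one_le_sqrt.2 (by linarith [two_le_pi])
  have hexp : exp (-x ^ 2 / 2) ≤ 1 := exp_le_one_iff.2 (by linarith [sq_nonneg x])
  exact mul_le_one₀ (inv_le_one_of_one_le₀ hsqrt) (exp_pos _).le hexp

lemma continuous_stdPdf : Continuous stdPdf := by
  unfold stdPdf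
  fun_prop

lemma integrable_stdPdf : Integrable stdPdf := by
  rw [stdPdf_eq_gaussianPDFReal]
  exact integrable_gaussianPDFReal 0 1

lemma hasDerivAt_stdCdf (x : ℝ) : HasDerivAt stdCdf (stdPdf x) x :=
  hasDerivAt_integral_Iic integrable_stdPdf continuous_stdPdf.continuousAt

lemma continuous_stdCdf : Continuous stdCdf :=
  continuous_iff_continuousAt.2 fun x ↦ (hasDerivAt_stdCdf x).continuousAt

lemma stdPdf_add (x t : ℝ) : stdPdf (x + t) = stdPdf x * exp (-(x * t) - t ^ 2 / 2) := by
  rw [stdPdf, stdPdf, mul_assoc, ← exp_add]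
  ring_nf

lemma integrable_exp_neg_mul_sub_sq_div_two (x : ℝ) :
    Integrable fun t ↦ exp (-(x * t) - t ^ 2 / 2) := by
  refine ((integrable_stdPdf.comp_add_left x).const_mul (stdPdf x)⁻¹).congr (.of_forall fun t ↦ ?_)
  simp only [stdPdf_add, inv_mul_cancel_left₀ (stdPdf_pos x).ne']

lemma stdCdf_eq_stdPdf_mul_integral (x : ℝ) :
    stdCdf x = stdPdf x * ∫ t in Iic 0, exp (-(x * t) - t ^ 2 / 2) := by
  have hshift := (measurePreserving_add_left volume x).setIntegral_preimage_emb
    (measurableEmbedding_addLeft x) stdPdf (Iic x)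
  rw [stdCdf, ← hshift, preimage_const_add_Iic, sub_self, ← integral_const_mul]
  simp only [stdPdf_add]

instance neZero_volume_restrict_Iic (a : ℝ) : NeZero (volume.restrict (Iic a)) := ⟨by simp⟩

lemma stdCdf_pos (x : ℝ) : 0 < stdCdf x := by
  rw [stdCdf_eq_stdPdf_mul_integral]
  exact mul_pos (stdPdf_pos x)
    (integral_exp_pos (integrable_exp_neg_mul_sub_sq_div_two x).integrableOn)

/-- The inverse Mills ratio `φ / Φ` of the standard Gaussian, i.e. the logarithmic derivative of `Φ`
(the textbook ratio `φ / (1 - Φ)` at `-x`). -/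
noncomputable def invMillsRatio (x : ℝ) : ℝ := stdPdf x / stdCdf x

lemma strictAnti_invMillsRatio : StrictAnti invMillsRatio := by
  intro a b hab
  have hint (x : ℝ) := (integrable_exp_neg_mul_sub_sq_div_two x).integrableOn (s := Iic 0)
  have hinv (x : ℝ) : invMillsRatio x = (∫ t in Iic 0, exp (-(x * t) - t ^ 2 / 2))⁻¹ := by
    rw [invMillsRatio, stdCdf_eq_stdPdf_mul_integral, div_mul_cancel_left₀ (stdPdf_pos x).ne']
  rw [hinv, hinv]
  refine inv_strictAnti₀ (integral_exp_pos (hint a))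
    (integral_lt_integral_of_ae_lt (hint a) (hint b) ?_)
  filter_upwards [ae_restrict_mem measurableSet_Iic, Measure.ae_ne _ 0] with t ht_nonpos ht_ne
  have ht : t < 0 := lt_of_le_of_ne ht_nonpos ht_ne
  exact exp_lt_exp.2 (by linarith [mul_lt_mul_of_neg_right hab ht])

lemma strictAnti_mul_comp_mul_left {h : ℝ → ℝ} (hh : StrictAnti h) {y : ℝ} (hy : y ≠ 0) :
    StrictAnti fun x ↦ y * h (y * x) := by
  intro a b hab
  rcases hy.lt_or_gt with hneg | hpos
  · exact mul_lt_mul_of_neg_left (hh (mul_lt_mul_of_neg_left hab hneg)) hneg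
  · exact mul_lt_mul_of_pos_left (hh (mul_lt_mul_of_pos_left hab hpos)) hpos

lemma hasDerivAt_log_stdCdf_mul (y x : ℝ) :
    HasDerivAt (fun x ↦ log (stdCdf (y * x))) (y * invMillsRatio (y * x)) x := by
  have hlog := ((hasDerivAt_stdCdf (y * x)).log (stdCdf_pos _).ne').comp x
    ((hasDerivAt_id x).const_mul y)
  exact hlog.congr_deriv (by rw [invMillsRatio, mul_one, mul_comm])

/-- The law of `x ~ N(μ, v)` given a probit observation `y`, with density proportional to
`Φ(y x) φ(x; μ, v)`. It is encoded as the exponential tilting of the Gaussian by `log Φ(y x)`, so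
that the normalising constant is built in. -/
noncomputable def probitPosterior (y μ : ℝ) (v : ℝ≥0) : Measure ℝ :=
  (gaussianReal μ v).tilted fun x ↦ log (stdCdf (y * x))

variable {y μ : ℝ} {v : ℝ≥0} {f : ℝ → ℝ}

lemma integrable_stdCdf_mul (hf : Integrable f (gaussianReal μ v)) (y : ℝ) :
    Integrable (fun x ↦ stdCdf (y * x) * f x) (gaussianReal μ v) :=
  hf.bdd_mul (continuous_stdCdf.comp (continuous_const_mul y)).aestronglyMeasurable
    (.of_forall fun x ↦ by
      rw [norm_of_nonneg (stdCdf_pos _).le]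
      exact stdCdf_le_one _)

lemma integrable_exp_log_stdCdf (y μ : ℝ) (v : ℝ≥0) :
    Integrable (fun x ↦ exp (log (stdCdf (y * x)))) (gaussianReal μ v) := by
  simpa only [exp_log (stdCdf_pos _), mul_one] using integrable_stdCdf_mul (integrable_const 1) y

instance isProbabilityMeasure_probitPosterior : IsProbabilityMeasure (probitPosterior y μ v) :=
  isProbabilityMeasure_tilted (integrable_exp_log_stdCdf y μ v)

lemma integrable_probitPosterior_iff :
    Integrable f (probitPosterior y μ v) ↔
      Integrable (fun x ↦ stdCdf (y * x) * f x) (gaussianReal μ v) := by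
  rw [probitPosterior, integrable_tilted_iff (integrable_exp_log_stdCdf y μ v)]
  simp only [exp_log (stdCdf_pos _), smul_eq_mul]

lemma memLp_id_probitPosterior : MemLp id 2 (probitPosterior y μ v) := by
  rw [memLp_two_iff_integrable_sq aestronglyMeasurable_id, integrable_probitPosterior_iff]
  exact integrable_stdCdf_mul (memLp_id_gaussianReal 2).integrable_sq y

lemma integrable_mul_invMillsRatio_probitPosterior (hf : Integrable f (gaussianReal μ v)) (y : ℝ) :
    Integrable (fun x ↦ f x * (y * invMillsRatio (y * x))) (probitPosterior y μ v) := by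
  rw [integrable_probitPosterior_iff]
  have hbdd := (hf.const_mul y).bdd_mul
    (continuous_stdPdf.comp (continuous_const_mul y)).aestronglyMeasurable
    (.of_forall fun x ↦ (norm_of_nonneg (stdPdf_pos (y * x)).le).trans_le (stdPdf_le_one _))
  refine hbdd.congr (.of_forall fun x ↦ ?_)
  have := (stdCdf_pos (y * x)).ne'
  simp only [invMillsRatio, Function.comp_apply]
  field_simp

instance nullSingletonClass_probitPosterior [NullSingletonClass (gaussianReal μ v)] :
    NullSingletonClass (probitPosterior y μ v) :=
  nullSingletonClass_tilted _

theorem variance_id_probitPosterior (hy : y ≠ 0) (hv : v ≠ 0) :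
    0 < Var[id; probitPosterior y μ v] ∧ Var[id; probitPosterior y μ v] < v := by
  have hZ := integrable_exp_log_stdCdf y μ v
  have := nullSingletonClass_gaussianReal (μ := μ) hv
  refine ⟨variance_id_pos memLp_id_probitPosterior,
    variance_id_tilted_gaussianReal_lt hv hZ (hasDerivAt_log_stdCdf_mul y)
      (strictAnti_mul_comp_mul_left strictAnti_invMillsRatio hy) memLp_id_probitPosterior ?_ ?_⟩
  · simpa only [one_mul, probitPosterior] using
      integrable_mul_invMillsRatio_probitPosterior (integrable_const (1 : ℝ)) y
  · exact integrable_mul_invMillsRatio_probitPosterior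
      ((memLp_id_gaussianReal 1).integrable le_rfl) y

lemma integral_probitPosterior {σ : ℝ} (hσ : 0 < σ) (f : ℝ → ℝ) :
    ∫ x, f x ∂probitPosterior y μ (σ ^ 2).toNNReal =
      ∫ x, f x * ((∫ u, stdCdf (y * u) * gPdf μ σ u)⁻¹ * stdCdf (y * x) * gPdf μ σ x) := by
  have hv : (σ ^ 2).toNNReal ≠ 0 := (toNNReal_pos.2 (pow_pos hσ 2)).ne'
  simp only [probitPosterior, integral_tilted, exp_log (stdCdf_pos _),
    integral_gaussianReal_eq_integral_smul hv, gPdf_eq_gaussianPDFReal μ hσ.le, smul_eq_mul]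
  simp only [mul_comm (gaussianPDFReal _ _ _), div_eq_inv_mul, mul_comm (f _), mul_right_comm]

end Probit

theorem stmt5_general (y μ σ : ℝ) (hy : y ≠ 0) (hσ : 0 < σ)
    (Z : ℝ) (hZ : Z = ∫ x : ℝ, stdCdf (y * x) * gPdf μ σ x)
    (p : ℝ → ℝ) (hp : p = fun x => Z⁻¹ * stdCdf (y * x) * gPdf μ σ x)
    (μhat : ℝ) (hμhat : μhat = ∫ x : ℝ, x * p x)
    (σhat2 : ℝ) (hσhat2 : σhat2 = ∫ x : ℝ, (x - μhat) ^ 2 * p x) :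
    0 < σhat2 ∧ σhat2 < σ ^ 2 := by
  subst hZ hp
  have hmean : μhat = ∫ x, x ∂probitPosterior y μ (σ ^ 2).toNNReal := by
    rw [hμhat, integral_probitPosterior hσ]
  have hvar : σhat2 = Var[id; probitPosterior y μ (σ ^ 2).toNNReal] := by
    rw [hσhat2, variance_eq_integral aemeasurable_id, ← integral_probitPosterior hσ, hmean]
    rfl
  have hbounds := variance_id_probitPosterior (μ := μ) hy (toNNReal_pos.2 (pow_pos hσ 2)).ne'
  rwa [coe_toNNReal _ (sq_nonneg σ), ← hvar] at hbounds

/-- Conditioning a Gaussian on a probit observation strictly reduces variance: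
if `σ̂²` is the variance of `p(x) ∝ Φ(y x) φ(x; μ, σ²)` then `0 < σ̂² < σ²`. -/
theorem stmt5 (y μ σ : ℝ) (hy : y = -1 ∨ y = 1) (hσ : 0 < σ)
    (Z : ℝ) (hZ : Z = ∫ x : ℝ, stdCdf (y * x) * gPdf μ σ x)
    (p : ℝ → ℝ) (hp : p = fun x => Z⁻¹ * stdCdf (y * x) * gPdf μ σ x)
    (μhat : ℝ) (hμhat : μhat = ∫ x : ℝ, x * p x)
    (σhat2 : ℝ) (hσhat2 : σhat2 = ∫ x : ℝ, (x - μhat) ^ 2 * p x) :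
    0 < σhat2 ∧ σhat2 < σ ^ 2 :=
  stmt5_general y μ σ (by rcases hy with rfl | rfl <;> norm_num) hσ Z hZ p hp μhat hμhat σhat2
    hσhat2
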